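/- Let θ₁, θ₂ ∈ M₃(ℝ) be traceless matrices, a₁, a₂ ∈ M₃(ℝ), and φ₁, φ₂ ∈ ℝ³. Suppose 2a₁ = θ₁ + L(a₁) − E(φ₁), 2φ₁ = Γ(θ₁) − Γ(a₁), a₁ + 2a₂ = θ₂ + L(a₂) − E(φ₂), and φ₁ + 2φ₂ = Γ(θ₂) − Γ(a₂). Then a₁ = θ₁/3, φ₁ = Γ(θ₁)/3, the symmetric traceless part of a₂ equals ⅓·θ₂⁺ − (1/9)·θ₁⁺, and φ₂ = −½·Γ(a₂ − θ₂ + ⅓·θ₁). -/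

import Mathlib

open Matrix

/-- The space of 3×3 real matrices. -/
abbrev M3 := Matrix (Fin 3) (Fin 3) ℝ

/-- The Levi–Civita symbol on `Fin 3`. -/
noncomputable def eps (i j k : Fin 3) : ℝ :=
  (((j : ℕ) : ℝ) - ((i : ℕ) : ℝ)) * (((k : ℕ) : ℝ) - ((i : ℕ) : ℝ)) *
    (((k : ℕ) : ℝ) - ((j : ℕ) : ℝ)) / 2

/-- The operator `L(a) = (tr a)·I − aᵀ`. -/
noncomputable def Lmap (a : M3) : M3 := (Matrix.trace a) • (1 : M3) - aᵀ

/-- The map `Γ : M₃(ℝ) → ℝ³`, `Γ(a)_l = Σ_{i,k} ε_{ikl} a_{ik}`. -/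
noncomputable def Gam (a : M3) : Fin 3 → ℝ := fun l => ∑ i, ∑ k, eps i k l * a i k

/-- The map `E : ℝ³ → M₃(ℝ)`, `E(c)_{li} = Σ_k ε_{kli} c_k`. -/
noncomputable def Emap (c : Fin 3 → ℝ) : M3 := fun l i => ∑ k, eps k l i * c k

/-- The symmetric traceless part `w⁺ = (w + wᵀ)/2 − (tr w/3)·I` of a matrix. -/
noncomputable def plusPart (w : M3) : M3 :=
  (2⁻¹ : ℝ) • (w + wᵀ) - (Matrix.trace w / 3) • (1 : M3)

/-!
Each pair of equations has the form `2 a = η + L a - E φ`, `2 φ = ξ - Γ a`. Splitting `M₃(ℝ)` into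
scalar, antisymmetric and symmetric traceless matrices makes `L` act as `2`, `1` and `-1`
respectively. Hence `a⁺` is always determined by the first equation, whereas on the scalar part that
equation only says `tr η = 0`, and on the antisymmetric part it only says `Γ a + 2 φ = Γ η`, which
is compatible with the second equation exactly when `ξ = Γ η`. The trace and the antisymmetric part
of `a₁` are therefore read off from the solvability of the equations for `(a₂, φ₂)`, where
`η = θ₂ - a₁` and `ξ = Γ θ₂ - φ₁`: it forces `tr a₁ = tr θ₂` and `Γ a₁ = φ₁`.
-/

theorem gam_eq (w : M3) : Gam w = ![w 1 2 - w 2 1, w 2 0 - w 0 2, w 0 1 - w 1 0] := by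
  ext l
  fin_cases l <;> simp [Gam, eps, Fin.sum_univ_three] <;> ring

theorem emap_eq (c : Fin 3 → ℝ) :
    Emap c = !![0, c 2, -c 1; -c 2, 0, c 0; c 1, -c 0, 0] := by
  ext l i
  fin_cases l <;> fin_cases i <;> simp [Emap, eps, Fin.sum_univ_three] <;> ring

theorem gam_add (v w : M3) : Gam (v + w) = Gam v + Gam w := by
  ext l
  simp [Gam, mul_add, Finset.sum_add_distrib]

theorem gam_smul (r : ℝ) (w : M3) : Gam (r • w) = r • Gam w := by
  ext l
  simp [Gam, Finset.mul_sum, mul_left_comm]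

theorem gam_sub (v w : M3) : Gam (v - w) = Gam v - Gam w := by
  ext l
  simp [Gam, mul_sub, Finset.sum_sub_distrib]

theorem gam_transpose (w : M3) : Gam wᵀ = -Gam w := by
  simp [gam_eq]

theorem gam_one : Gam 1 = 0 := by
  simp [gam_eq]

theorem gam_lmap (w : M3) : Gam (Lmap w) = Gam w := by
  simp [Lmap, gam_sub, gam_smul, gam_one, gam_transpose]

theorem gam_emap (c : Fin 3 → ℝ) : Gam (Emap c) = (2 : ℝ) • c := by
  ext l
  fin_cases l <;> simp [gam_eq, emap_eq] <;> ring

theorem emap_gam (w : M3) : Emap (Gam w) = w - wᵀ := by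
  ext l i
  fin_cases l <;> fin_cases i <;> simp [gam_eq, emap_eq]

theorem transpose_emap (c : Fin 3 → ℝ) : (Emap c)ᵀ = -Emap c := by
  ext l i
  fin_cases l <;> fin_cases i <;> simp [emap_eq]

theorem trace_emap (c : Fin 3 → ℝ) : trace (Emap c) = 0 := by
  simp [emap_eq, trace_fin_three]

theorem trace_lmap (w : M3) : trace (Lmap w) = 2 * trace w := by
  simp only [Lmap, trace_sub, trace_smul, trace_one, trace_transpose, Fintype.card_fin,
    smul_eq_mul]
  ring

theorem plusPart_add (v w : M3) : plusPart (v + w) = plusPart v + plusPart w := by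
  simp only [plusPart, transpose_add, trace_add]
  module

theorem plusPart_smul (r : ℝ) (w : M3) : plusPart (r • w) = r • plusPart w := by
  simp only [plusPart, transpose_smul, trace_smul, smul_eq_mul]
  module

theorem plusPart_sub (v w : M3) : plusPart (v - w) = plusPart v - plusPart w := by
  simp only [plusPart, transpose_sub, trace_sub]
  module

theorem plusPart_transpose (w : M3) : plusPart wᵀ = plusPart w := by
  simp [plusPart, add_comm]

theorem plusPart_one : plusPart 1 = 0 := by
  simp only [plusPart, transpose_one, trace_one, Fintype.card_fin]
  module

theorem plusPart_lmap (w : M3) : plusPart (Lmap w) = -plusPart w := by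
  simp [Lmap, plusPart_sub, plusPart_smul, plusPart_one, plusPart_transpose]

theorem plusPart_emap (c : Fin 3 → ℝ) : plusPart (Emap c) = 0 := by
  simp [plusPart, transpose_emap, trace_emap]

theorem eq_plusPart_add_trace_add_emap_gam (w : M3) :
    w = plusPart w + (trace w / 3) • (1 : M3) + (2⁻¹ : ℝ) • Emap (Gam w) := by
  rw [emap_gam, plusPart]
  module

theorem eq_of_trace_eq_of_plusPart_eq_of_gam_eq {v w : M3} (htrace : trace v = trace w)
    (hplus : plusPart v = plusPart w) (hgam : Gam v = Gam w) : v = w := by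
  rw [eq_plusPart_add_trace_add_emap_gam v, htrace, hplus, hgam,
    ← eq_plusPart_add_trace_add_emap_gam w]

section CoefficientEquation

variable {η a : M3} {φ : Fin 3 → ℝ}

theorem trace_eq_zero_of_two_smul_eq (h : (2 : ℝ) • a = η + Lmap a - Emap φ) :
    trace η = 0 := by
  have htrace := congrArg trace h
  simp only [trace_smul, trace_sub, trace_add, trace_lmap, trace_emap, smul_eq_mul] at htrace
  linarith

theorem gam_add_two_smul_of_two_smul_eq (h : (2 : ℝ) • a = η + Lmap a - Emap φ) :
    Gam a + (2 : ℝ) • φ = Gam η := by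
  have hgam := congrArg Gam h
  simp only [gam_smul, gam_sub, gam_add, gam_lmap, gam_emap] at hgam
  linear_combination (norm := module) hgam

theorem plusPart_eq_of_two_smul_eq (h : (2 : ℝ) • a = η + Lmap a - Emap φ) :
    plusPart a = (3⁻¹ : ℝ) • plusPart η := by
  have hplus := congrArg plusPart h
  simp only [plusPart_smul, plusPart_sub, plusPart_add, plusPart_lmap, plusPart_emap] at hplus
  linear_combination (norm := module) (3⁻¹ : ℝ) • hplus

end CoefficientEquation

theorem second_order_coefficients (θ₁ θ₂ : M3)
    (hθ₁ : Matrix.trace θ₁ = 0) (hθ₂ : Matrix.trace θ₂ = 0)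
    (a₁ a₂ : M3) (φ₁ φ₂ : Fin 3 → ℝ)
    (h1 : (2 : ℝ) • a₁ = θ₁ + Lmap a₁ - Emap φ₁)
    (h2 : (2 : ℝ) • φ₁ = Gam θ₁ - Gam a₁)
    (h3 : a₁ + (2 : ℝ) • a₂ = θ₂ + Lmap a₂ - Emap φ₂)
    (h4 : φ₁ + (2 : ℝ) • φ₂ = Gam θ₂ - Gam a₂) :
    a₁ = (3⁻¹ : ℝ) • θ₁ ∧
    φ₁ = (3⁻¹ : ℝ) • Gam θ₁ ∧
    plusPart a₂ = (3⁻¹ : ℝ) • plusPart θ₂ - (9⁻¹ : ℝ) • plusPart θ₁ ∧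
    φ₂ = -(2⁻¹ : ℝ) • Gam (a₂ - θ₂ + (3⁻¹ : ℝ) • θ₁) := by
  have h3' : (2 : ℝ) • a₂ = (θ₂ - a₁) + Lmap a₂ - Emap φ₂ := by
    linear_combination (norm := module) h3
  have htrace : trace a₁ = 0 := by
    have hsolvable := trace_eq_zero_of_two_smul_eq h3'
    rw [trace_sub, hθ₂] at hsolvable
    linarith
  have hgam : Gam a₁ = φ₁ := by
    have hsolvable := gam_add_two_smul_of_two_smul_eq h3'
    rw [gam_sub] at hsolvable
    linear_combination (norm := module) hsolvable - h4
  have hφ₁ : φ₁ = (3⁻¹ : ℝ) • Gam θ₁ := by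
    rw [hgam] at h2
    linear_combination (norm := module) (3⁻¹ : ℝ) • h2
  have ha₁ : a₁ = (3⁻¹ : ℝ) • θ₁ := by
    apply eq_of_trace_eq_of_plusPart_eq_of_gam_eq
    · rw [htrace, trace_smul, hθ₁, smul_zero]
    · rw [plusPart_eq_of_two_smul_eq h1, plusPart_smul]
    · rw [hgam, hφ₁, gam_smul]
  refine ⟨ha₁, hφ₁, ?_, ?_⟩
  · rw [plusPart_eq_of_two_smul_eq h3', plusPart_sub, ha₁, plusPart_smul]
    module
  · rw [gam_add, gam_sub, gam_smul, ← hφ₁]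
    linear_combination (norm := module) (2⁻¹ : ℝ) • h4
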